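/- arXiv:2401.00966 — 4 statements merged into one kernel-verified Lean document; each statement's English description precedes it below -/
import Mathlib

section
/- For every real number x, ∑_{n=0}^∞ B_n x^n / n! = exp(e^x − 1), where B_n = e^{-1} · ∑_{l=0}^∞ l^n / l! is the n-th Bell number given by Dobinski's formula (with the convention 0^0 = 1). -/
/-!
The generating function is the double series `e⁻¹ ∑ₙ ∑ₗ (l x)ⁿ / (l! n!)`. It converges
absolutely, because summing the absolute values over `n` first gives
`∑ₗ e^{l |x|} / l! = exp (e^{|x|})`. The order of summation may therefore be exchanged, and the
same computation without absolute values gives `e⁻¹ · exp (e^x) = exp (e^x - 1)`.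
-/

/-- The `n`-th Bell number, defined by Dobinski's formula
`B_n = e⁻¹ · ∑_{l=0}^∞ l^n / l!` (with the convention `0^0 = 1`). -/
noncomputable def bellNumber (n : ℕ) : ℝ :=
  Real.exp (-1) * ∑' l : ℕ, (l : ℝ) ^ n / (Nat.factorial l : ℝ)

theorem hasSum_pow_div_factorial (x : ℝ) :
    HasSum (fun n : ℕ => x ^ n / (Nat.factorial n : ℝ)) (Real.exp x) := by
  rw [Real.exp_eq_exp_ℝ]
  exact NormedSpace.expSeries_div_hasSum_exp x

/-- The inner sum over `n`, for a fixed index `l` of Dobinski's series. -/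
theorem hasSum_dobinski_row (x : ℝ) (l : ℕ) :
    HasSum (fun n : ℕ => (l : ℝ) ^ n / (Nat.factorial l : ℝ) * (x ^ n / (Nat.factorial n : ℝ)))
      (Real.exp x ^ l / (Nat.factorial l : ℝ)) := by
  have h := (hasSum_pow_div_factorial (l * x)).div_const (Nat.factorial l : ℝ)
  rw [Real.exp_nat_mul] at h
  refine h.congr_fun ?_
  intro n
  rw [mul_pow]
  ring

theorem summable_dobinski_double (x : ℝ) :
    Summable (fun p : ℕ × ℕ =>
      (p.1 : ℝ) ^ p.2 / (Nat.factorial p.1 : ℝ) * (x ^ p.2 / (Nat.factorial p.2 : ℝ))) := by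
  have h : Summable (fun p : ℕ × ℕ =>
      (p.1 : ℝ) ^ p.2 / (Nat.factorial p.1 : ℝ) * (|x| ^ p.2 / (Nat.factorial p.2 : ℝ))) := by
    refine (summable_prod_of_nonneg (fun _ => by positivity)).mpr ⟨fun l => ?_, ?_⟩
    · exact (hasSum_dobinski_row |x| l).summable
    · simp only [(hasSum_dobinski_row |x| _).tsum_eq]
      exact (hasSum_pow_div_factorial (Real.exp |x|)).summable
  refine Summable.of_norm (h.congr fun p => ?_)
  simp

/-- The exponential generating function of the Bell numbers:
`∑_{n=0}^∞ B_n x^n / n! = exp (e^x − 1)` for every real `x`. -/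
theorem bell_exponential_generating_function (x : ℝ) :
    ∑' n : ℕ, bellNumber n * x ^ n / (Nat.factorial n : ℝ)
      = Real.exp (Real.exp x - 1) := by
  have row : ∀ n : ℕ, bellNumber n * x ^ n / (Nat.factorial n : ℝ) = Real.exp (-1) *
      ∑' l : ℕ, (l : ℝ) ^ n / (Nat.factorial l : ℝ) * (x ^ n / (Nat.factorial n : ℝ)) := by
    intro n
    rw [tsum_mul_right, bellNumber]
    ring
  simp only [row]
  have swap := Summable.tsum_comm (f := fun l n : ℕ =>
    (l : ℝ) ^ n / (Nat.factorial l : ℝ) * (x ^ n / (Nat.factorial n : ℝ)))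
    (summable_dobinski_double x)
  rw [tsum_mul_left, swap]
  simp only [(hasSum_dobinski_row x _).tsum_eq]
  rw [(hasSum_pow_div_factorial (Real.exp x)).tsum_eq, ← Real.exp_add]
  congr 1
  ring
end

section
/- For every real φ > 0, the Bell probability mass function sums to one: ∑_{y=0}^∞ φ^y · e^{1 − e^φ} · B_y / y! = 1, where B_y is the y-th Bell number given by Dobinski's formula. -/
/-- The probability mass function of the Bell distribution with parameter `φ`:
`p_φ(y) = φ^y · e^{1 − e^φ} · B_y / y!`. -/
noncomputable def bellPMF (φ : ℝ) (y : ℕ) : ℝ :=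
  φ ^ y * Real.exp (1 - Real.exp φ) * bellNumber y / (Nat.factorial y : ℝ)

theorem hasSum_inner (φ : ℝ) (l : ℕ) :
    HasSum (fun y : ℕ => ((l : ℝ) * φ) ^ y / (Nat.factorial y : ℝ) / (Nat.factorial l : ℝ))
      (Real.exp φ ^ l / (Nat.factorial l : ℝ)) := by
  rw [← Real.exp_nat_mul]
  exact (hasSum_pow_div_factorial _).div_const _

theorem summable_double (φ : ℝ) (hφ : 0 < φ) :
    Summable (Function.uncurry fun l y : ℕ =>
      ((l : ℝ) * φ) ^ y / (Nat.factorial y : ℝ) / (Nat.factorial l : ℝ)) := by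
  refine (summable_prod_of_nonneg ?_).2 ⟨fun l => (hasSum_inner φ l).summable, ?_⟩
  · rintro ⟨l, y⟩
    simp only [Function.uncurry, Pi.zero_apply]
    positivity
  · simp only [Function.uncurry, (hasSum_inner φ _).tsum_eq]
    exact (hasSum_pow_div_factorial _).summable

/-- For every real `φ > 0`, the Bell probability mass function sums to one. -/
theorem bellPMF_tsum_eq_one (φ : ℝ) (hφ : 0 < φ) :
    ∑' y : ℕ, bellPMF φ y = 1 := by
  have hterm (y : ℕ) : bellPMF φ y = Real.exp (-Real.exp φ) *
      ∑' l : ℕ, ((l : ℝ) * φ) ^ y / (Nat.factorial y : ℝ) / (Nat.factorial l : ℝ) := by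
    have hsum : ∑' l : ℕ, ((l : ℝ) * φ) ^ y / (Nat.factorial y : ℝ) / (Nat.factorial l : ℝ)
        = φ ^ y / (Nat.factorial y : ℝ) * ∑' l : ℕ, (l : ℝ) ^ y / (Nat.factorial l : ℝ) := by
      rw [← tsum_mul_left]
      refine tsum_congr fun l => ?_
      rw [mul_pow]
      ring
    have hexp : Real.exp (-Real.exp φ) = Real.exp (1 - Real.exp φ) * Real.exp (-1) := by
      rw [← Real.exp_add]
      ring_nf
    rw [hsum, hexp, bellPMF, bellNumber]
    ring
  simp_rw [hterm]
  rw [tsum_mul_left, (summable_double φ hφ).tsum_comm]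
  simp_rw [(hasSum_inner φ _).tsum_eq]
  rw [(hasSum_pow_div_factorial _).tsum_eq, ← Real.exp_add, neg_add_cancel, Real.exp_zero]
end

section
/- For every real φ > 0, the mean of the Bell distribution with parameter φ equals φ e^φ: ∑_{y=0}^∞ y · p_φ(y) = φ e^φ, where p_φ(y) = φ^y · e^{1 − e^φ} · B_y / y!. -/
/-- The first-moment series of the exponential series; divided by `e ^ x` it is the mean of the
Poisson distribution. -/
lemma hasSum_nat_mul_pow_div_factorial (x : ℝ) :
    HasSum (fun n : ℕ => (n : ℝ) * (x ^ n / (n.factorial : ℝ))) (x * Real.exp x) := by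
  have h : HasSum (fun n : ℕ => x ^ n / (n.factorial : ℝ)) (Real.exp x) := by
    rw [Real.exp_eq_exp_ℝ]
    exact NormedSpace.expSeries_div_hasSum_exp x
  -- The `n = 0` term vanishes, and the shifted series is `x` times the exponential series.
  rw [← hasSum_nat_add_iff' 1]
  simp only [Finset.sum_range_one, Nat.cast_zero, zero_mul, sub_zero]
  refine (h.mul_left x).congr_fun ?_
  intro n
  rw [Nat.factorial_succ]
  have := n.factorial_ne_zero
  push_cast
  field_simp
  ring

/-- The term of index `(l, y)` of the double series `∑_y ∑_l y (φ l) ^ y / (y! l!)`. -/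
noncomputable def bellMeanTerm (φ : ℝ) (l y : ℕ) : ℝ :=
  (y : ℝ) * ((φ * l) ^ y / (y.factorial : ℝ)) / (l.factorial : ℝ)

lemma hasSum_bellMeanTerm_right (φ : ℝ) (l : ℕ) :
    HasSum (bellMeanTerm φ l) (φ * l * Real.exp (φ * l) / (l.factorial : ℝ)) :=
  (hasSum_nat_mul_pow_div_factorial (φ * l)).div_const _

lemma hasSum_bellMeanTerm_left (φ : ℝ) :
    HasSum (fun l : ℕ => φ * l * Real.exp (φ * l) / (l.factorial : ℝ))
      (φ * (Real.exp φ * Real.exp (Real.exp φ))) := by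
  refine ((hasSum_nat_mul_pow_div_factorial (Real.exp φ)).mul_left φ).congr_fun ?_
  intro l
  rw [mul_comm φ (l : ℝ), Real.exp_nat_mul]
  ring

lemma summable_bellMeanTerm {φ : ℝ} (hφ : 0 < φ) :
    Summable (Function.uncurry (bellMeanTerm φ)) := by
  refine (summable_prod_of_nonneg ?_).2 ⟨fun l => (hasSum_bellMeanTerm_right φ l).summable, ?_⟩
  · rintro ⟨l, y⟩
    simp only [Function.uncurry, bellMeanTerm, Pi.zero_apply]
    positivity
  · simp only [Function.uncurry, (hasSum_bellMeanTerm_right φ _).tsum_eq]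
    exact (hasSum_bellMeanTerm_left φ).summable

lemma nat_mul_bellPMF (φ : ℝ) (y : ℕ) :
    (y : ℝ) * bellPMF φ y = Real.exp (-Real.exp φ) * ∑' l : ℕ, bellMeanTerm φ l y := by
  have hterm : ∀ l : ℕ, bellMeanTerm φ l y =
      ((y : ℝ) * φ ^ y / (y.factorial : ℝ)) * ((l : ℝ) ^ y / (l.factorial : ℝ)) := by
    intro l
    rw [bellMeanTerm, mul_pow]
    ring
  have hexp : Real.exp (-Real.exp φ) = Real.exp (1 - Real.exp φ) * Real.exp (-1) := by
    rw [← Real.exp_add]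
    ring_nf
  simp only [hterm]
  rw [tsum_mul_left, hexp, bellPMF, bellNumber]
  ring

/-- For every real `φ > 0`, the mean of the Bell distribution with parameter `φ`
equals `φ e^φ`. -/
theorem bell_mean (φ : ℝ) (hφ : 0 < φ) :
    ∑' y : ℕ, (y : ℝ) * bellPMF φ y = φ * Real.exp φ := by
  simp only [nat_mul_bellPMF]
  rw [tsum_mul_left, (summable_bellMeanTerm hφ).tsum_comm]
  simp only [(hasSum_bellMeanTerm_right φ _).tsum_eq]
  rw [(hasSum_bellMeanTerm_left φ).tsum_eq, Real.exp_neg]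
  have := Real.exp_ne_zero (Real.exp φ)
  field_simp
end

section
/- For every real φ > 0, the second moment of the Bell distribution with parameter φ satisfies ∑_{y=0}^∞ y² · p_φ(y) = φ e^φ (1 + φ) + (φ e^φ)², where p_φ(y) = φ^y · e^{1 − e^φ} · B_y / y!. -/
theorem hasSum_mul_pow_div_factorial (x : ℝ) :
    HasSum (fun n : ℕ => (n : ℝ) * (x ^ n / (Nat.factorial n : ℝ))) (x * Real.exp x) := by
  rw [← hasSum_nat_add_iff' 1]
  convert (hasSum_pow_div_factorial x).mul_left x using 1
  · rfl
  · funext n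
    have h1 : ((n : ℝ) + 1) ≠ 0 := by positivity
    rw [Nat.factorial_succ]
    push_cast
    field_simp
    ring
  · simp

theorem hasSum_sq_mul_pow_div_factorial (x : ℝ) :
    HasSum (fun n : ℕ => (n : ℝ) ^ 2 * (x ^ n / (Nat.factorial n : ℝ)))
      ((x + x ^ 2) * Real.exp x) := by
  rw [← hasSum_nat_add_iff' 1]
  convert ((hasSum_mul_pow_div_factorial x).add (hasSum_pow_div_factorial x)).mul_left x using 1
  · rfl
  · funext n
    have h1 : ((n : ℝ) + 1) ≠ 0 := by positivity
    rw [Nat.factorial_succ]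
    push_cast
    field_simp
    ring
  · simp
    ring

/-- For every real `φ > 0`, the second moment of the Bell distribution with parameter `φ`
equals `φ e^φ (1 + φ) + (φ e^φ)²`. -/
theorem bell_second_moment (φ : ℝ) (hφ : 0 < φ) :
    ∑' y : ℕ, (y : ℝ) ^ 2 * bellPMF φ y
      = φ * Real.exp φ * (1 + φ) + (φ * Real.exp φ) ^ 2 := by
  set a := Real.exp φ with ha
  let f : ℕ → ℕ → ℝ := fun l y =>
    ((y : ℝ) ^ 2 * ((φ * l) ^ y / (Nat.factorial y : ℝ))) * (1 / (Nat.factorial l : ℝ))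
  have inner (l : ℕ) : HasSum (f l)
      (((φ * l + (φ * l) ^ 2) * Real.exp (φ * l)) * (1 / (Nat.factorial l : ℝ))) :=
    (hasSum_sq_mul_pow_div_factorial (φ * l)).mul_right _
  have outer : HasSum (fun l : ℕ => ∑' y, f l y)
      (φ * (a * Real.exp a) + φ ^ 2 * ((a + a ^ 2) * Real.exp a)) := by
    convert ((hasSum_mul_pow_div_factorial a).mul_left φ).add
      ((hasSum_sq_mul_pow_div_factorial a).mul_left (φ ^ 2)) using 1
    · rfl
    funext l
    have h : Real.exp (φ * l) = a ^ l := by rw [ha, ← Real.exp_nat_mul, mul_comm]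
    rw [(inner l).tsum_eq, h]
    ring
  have hs : Summable (Function.uncurry f) := by
    refine (summable_prod_of_nonneg ?_).2 ⟨fun l => (inner l).summable, outer.summable⟩
    rintro ⟨l, y⟩
    simp only [Function.uncurry, f, Pi.zero_apply]
    positivity
  have term (y : ℕ) : (y : ℝ) ^ 2 * bellPMF φ y = Real.exp (-a) * ∑' l, f l y := by
    have h : Real.exp (1 - a) * Real.exp (-1) = Real.exp (-a) := by
      rw [← Real.exp_add]
      ring_nf
    have h2 : ∑' l, f l y = ((y : ℝ) ^ 2 * φ ^ y / (Nat.factorial y : ℝ)) *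
        ∑' l : ℕ, (l : ℝ) ^ y / (Nat.factorial l : ℝ) := by
      rw [← tsum_mul_left]
      refine tsum_congr fun l => ?_
      simp only [f, mul_pow]
      ring
    rw [h2, ← h, bellPMF, bellNumber]
    ring
  rw [tsum_congr term, tsum_mul_left, hs.tsum_comm, outer.tsum_eq]
  have h : Real.exp (-a) * Real.exp a = 1 := by rw [← Real.exp_add]; simp
  linear_combination (φ * a + φ ^ 2 * (a + a ^ 2)) * h
end
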